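/- Let k be a field of characteristic p > 0, G a finite group, K/k a field extension, B = K[t]/(t^p), and α : B → KG a K-algebra homomorphism (KG the group algebra of G over K) such that KG is flat as a B-module via α. Define χ_α on finite dimensional kG-modules by χ_α(M) = dim_K Hom_B(α^*(M ⊗_k K), K), where M ⊗_k K is the KG-module obtained by base change, α^* denotes restriction of scalars along α, and K = B/(t) is the one-dimensional B-module with t acting as 0. Then χ_α is a subadditive function, and its additive locus Adloc(χ_α) equals Thick(α) := { M finite dimensional kG-module : α^*(M ⊗_k K) is a projective B-module }. -/

import Mathlib

open Polynomial

/-- The composition length of a module (the length of a composition series,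
zero if none exists). -/
noncomputable def compLength (R : Type) [Ring R] (M : Type) [AddCommGroup M] [Module R M] : ℕ := by
  classical
  exact if h : ∃ s : CompositionSeries (Submodule R M), s.head = ⊥ ∧ s.last = ⊤ then
    h.choose.length else 0

/-- The truncated polynomial algebra `B = K[t]/(t^p)`. -/
noncomputable abbrev Bp (K : Type) [Field K] (p : ℕ) : Type :=
  AdjoinRoot ((X : K[X]) ^ p)

/-- The algebra map `B → K` sending `t` to `0`, exhibiting `K = B/(t)` as a `B`-module. -/
noncomputable def resB (K : Type) [Field K] (p : ℕ) (hp : p ≠ 0) : Bp K p →ₐ[K] K :=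
  AdjoinRoot.liftAlgHom _ (Algebra.ofId K K) 0 (by simp [zero_pow hp])

/-- Base change of a `kG`-module `M` to a representation of `G` over `K`. -/
noncomputable def rhoK (k K G : Type) [Field k] [Field K] [Algebra k K] [Group G]
    (M : Type) [AddCommGroup M] [Module (MonoidAlgebra k G) M] :
    Representation K G
      (TensorProduct k K (RestrictScalars k (MonoidAlgebra k G) M)) :=
  MonoidHom.comp
    (Module.End.baseChangeHom k K
      (RestrictScalars k (MonoidAlgebra k G) M)).toRingHom.toMonoidHom
    (Representation.ofModule M)

/-- The base-changed module `M ⊗_k K`, as a module over `KG = MonoidAlgebra K G`. -/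
noncomputable abbrev MK (k K G : Type) [Field k] [Field K] [Algebra k K] [Group G]
    (M : Type) [AddCommGroup M] [Module (MonoidAlgebra k G) M] : Type :=
  (rhoK k K G M).asModule

/-- `χ_α(M) = dim_K Hom_B(α^*(M ⊗_k K), K)`, where `α^*` is restriction along `α`. -/
noncomputable def chiAlpha (k K G : Type) [Field k] [Field K] [Algebra k K] [Group G]
    (p : ℕ) (hp : p ≠ 0) (α : Bp K p →ₐ[K] MonoidAlgebra K G)
    (M : Type) [AddCommGroup M] [Module (MonoidAlgebra k G) M] : ℕ :=
  letI : Module (Bp K p) (MK k K G M) := Module.compHom _ α.toRingHom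
  letI : Module (Bp K p) K := Module.compHom K (resB K p hp).toRingHom
  haveI : SMulCommClass (Bp K p) K K :=
    ⟨fun b c x => by
      show resB K p hp b * (c * x) = c * (resB K p hp b * x); ring⟩
  Module.finrank K ((MK k K G M) →ₗ[Bp K p] K)

/-- `M` belongs to `Thick(α)`: `M` is finite dimensional and `α^*(M ⊗_k K)` is a
projective `B`-module. -/
def MemThick (k K G : Type) [Field k] [Field K] [Algebra k K] [Group G]
    (p : ℕ) (α : Bp K p →ₐ[K] MonoidAlgebra K G)
    (M : Type) [AddCommGroup M] [Module (MonoidAlgebra k G) M] : Prop :=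
  Module.Finite (MonoidAlgebra k G) M ∧
  (letI : Module (Bp K p) (MK k K G M) := Module.compHom _ α.toRingHom
   Module.Projective (Bp K p) (MK k K G M))

/-- A subadditive function on the finite dimensional (i.e. finitely generated)
`A`-modules: it depends only on the isomorphism class, is additive on direct sums, and
satisfies `χ(X) + χ(Z) ≥ χ(Y)` for every exact sequence `X → Y → Z → 0`. -/
def IsSubadditive (A : Type) [Ring A]
    (χ : (X : Type) → [AddCommGroup X] → [Module A X] → ℕ) : Prop :=
  (∀ (X Y : Type) [AddCommGroup X] [Module A X] [AddCommGroup Y] [Module A Y],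
      Module.Finite A X → Module.Finite A Y →
      (X ≃ₗ[A] Y) → χ X = χ Y) ∧
  (∀ (X Y : Type) [AddCommGroup X] [Module A X] [AddCommGroup Y] [Module A Y],
      Module.Finite A X → Module.Finite A Y →
      χ (X × Y) = χ X + χ Y) ∧
  (∀ (X Y Z : Type) [AddCommGroup X] [Module A X] [AddCommGroup Y] [Module A Y]
      [AddCommGroup Z] [Module A Z],
      Module.Finite A X → Module.Finite A Y → Module.Finite A Z →
      ∀ (f : X →ₗ[A] Y) (g : Y →ₗ[A] Z),
      Function.Exact f g → Function.Surjective g → χ Y ≤ χ X + χ Z)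

/-- Membership in the additive locus `Adloc(χ)`: `Z` is finite dimensional and
`χ(X) - χ(Y) + χ(Z) = 0` for every short exact sequence `0 → X → Y → Z → 0` of
finite dimensional modules. -/
def MemAdloc (A : Type) [Ring A]
    (χ : (X : Type) → [AddCommGroup X] → [Module A X] → ℕ)
    (Z : Type) [AddCommGroup Z] [Module A Z] : Prop :=
  Module.Finite A Z ∧
  ∀ (X Y : Type) [AddCommGroup X] [Module A X] [AddCommGroup Y] [Module A Y],
    Module.Finite A X → Module.Finite A Y →
    ∀ (f : X →ₗ[A] Y) (g : Y →ₗ[A] Z),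
    Function.Injective f → Function.Exact f g → Function.Surjective g →
    χ X + χ Z = χ Y

open scoped TensorProduct

set_option linter.unusedSectionVars false

section Abstract

variable {K B : Type} [Field K] [CommRing B] [Algebra K B] [Module B K] [SMulCommClass B K K]
variable {X Y Z : Type} [AddCommGroup X] [AddCommGroup Y] [AddCommGroup Z]
  [Module B X] [Module B Y] [Module B Z] [Module K X] [Module K Y] [Module K Z]
  [IsScalarTower K B X] [IsScalarTower K B Y] [IsScalarTower K B Z]

/-- Hom into K is finite dimensional. -/
theorem aux_fin [IsScalarTower K B K] [Module.Finite K X] : Module.Finite K (X →ₗ[B] K) := by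
  let F : (X →ₗ[B] K) →ₗ[K] (X →ₗ[K] K) :=
    { toFun := fun f => f.restrictScalars K
      map_add' := fun _ _ => rfl
      map_smul' := fun _ _ => rfl }
  refine Module.Finite.of_injective F ?_
  intro f g h
  ext x
  exact LinearMap.congr_fun h x

theorem aux_surj [IsScalarTower K B K] [Module.Finite K X] (f : X →ₗ[B] Y)
    (hf : Function.Surjective f) :
    Module.finrank K (Y →ₗ[B] K) ≤ Module.finrank K (X →ₗ[B] K) := by
  have : Module.Finite K (X →ₗ[B] K) := aux_fin
  apply LinearMap.finrank_le_finrank_of_injective (f := LinearMap.lcomp K K f)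
  intro a b h
  ext y
  obtain ⟨x, rfl⟩ := hf y
  exact LinearMap.congr_fun h x

theorem aux_count [IsScalarTower K B K] [Module.Finite K Y] (f : X →ₗ[B] Y) (g : Y →ₗ[B] Z)
    (hfg : Function.Exact f g) (hg : Function.Surjective g) :
    Module.finrank K (Y →ₗ[B] K) = 
      Module.finrank K (LinearMap.range (LinearMap.lcomp K K f : (Y →ₗ[B] K) →ₗ[K] (X →ₗ[B] K)))
      + Module.finrank K (Z →ₗ[B] K) := by
  have : Module.Finite K (Y →ₗ[B] K) := aux_fin
  rw [← LinearMap.finrank_range_add_finrank_ker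
    (LinearMap.lcomp K K f : (Y →ₗ[B] K) →ₗ[K] (X →ₗ[B] K))]
  congr 1
  have hex := LinearMap.exact_lcomp_of_exact_of_surjective K hfg hg
  have hinj : Function.Injective (LinearMap.lcomp K K g : (Z →ₗ[B] K) →ₗ[K] (Y →ₗ[B] K)) := 
    LinearMap.lcomp_injective_of_surjective g hg
  have : LinearMap.ker (LinearMap.lcomp K K f : (Y →ₗ[B] K) →ₗ[K] (X →ₗ[B] K)) =
      LinearMap.range (LinearMap.lcomp K K g : (Z →ₗ[B] K) →ₗ[K] (Y →ₗ[B] K)) := by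
    ext φ
    exact hex φ
  rw [this, LinearMap.finrank_range_of_inj hinj]

theorem aux_le [IsScalarTower K B K] [Module.Finite K X] [Module.Finite K Y]
    (f : X →ₗ[B] Y) (g : Y →ₗ[B] Z)
    (hfg : Function.Exact f g) (hg : Function.Surjective g) :
    Module.finrank K (Y →ₗ[B] K) ≤ 
      Module.finrank K (X →ₗ[B] K) + Module.finrank K (Z →ₗ[B] K) := by
  have : Module.Finite K (X →ₗ[B] K) := aux_fin
  rw [aux_count f g hfg hg]
  gcongr
  exact Submodule.finrank_le _

theorem aux_eq [IsScalarTower K B K] [Module.Finite K Y]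
    (f : X →ₗ[B] Y) (g : Y →ₗ[B] Z)
    (hfg : Function.Exact f g) (hg : Function.Surjective g) (r : Y →ₗ[B] X)
    (hr : r ∘ₗ f = LinearMap.id) :
    Module.finrank K (Y →ₗ[B] K) = 
      Module.finrank K (X →ₗ[B] K) + Module.finrank K (Z →ₗ[B] K) := by
  rw [aux_count f g hfg hg]
  congr 1
  have : LinearMap.range (LinearMap.lcomp K K f : (Y →ₗ[B] K) →ₗ[K] (X →ₗ[B] K)) = ⊤ := by
    rw [LinearMap.range_eq_top]
    intro φ
    refine ⟨φ ∘ₗ r, ?_⟩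
    ext x
    exact congrArg φ (LinearMap.congr_fun hr x)
  rw [this, finrank_top]

theorem aux_ext [IsScalarTower K B K] [Module.Finite K X] [Module.Finite K Y]
    (f : X →ₗ[B] Y) (g : Y →ₗ[B] Z)
    (hfg : Function.Exact f g) (hg : Function.Surjective g) 
    (h : Module.finrank K (Y →ₗ[B] K) = 
      Module.finrank K (X →ₗ[B] K) + Module.finrank K (Z →ₗ[B] K)) (φ : X →ₗ[B] K) :
    ∃ ψ : Y →ₗ[B] K, ∀ x, ψ (f x) = φ x := by
  have : Module.Finite K (X →ₗ[B] K) := aux_fin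
  rw [aux_count f g hfg hg] at h
  have := Submodule.eq_top_of_finrank_eq (Nat.add_right_cancel h)
  rw [LinearMap.range_eq_top] at this
  obtain ⟨ψ, hψ⟩ := this φ
  exact ⟨ψ, fun x => LinearMap.congr_fun hψ x⟩

theorem aux_local (ε : B →ₐ[K] K) (hε : ∀ b, ε b = 0 → IsNilpotent b) :
    ∃ _ : IsLocalRing B, ∀ b, b ∈ IsLocalRing.maximalIdeal B ↔ ε b = 0 := by
  have hnt : Nontrivial B := ε.toRingHom.domain_nontrivial
  have hu : ∀ b, ε b ≠ 0 → IsUnit b := by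
    intro b hb
    have h1 : IsNilpotent (b - algebraMap K B (ε b)) := hε _ (by simp)
    have h2 : IsUnit (algebraMap K B (ε b)) := (IsUnit.mk0 _ hb).map _
    have := h1.isUnit_add_left_of_commute h2 (Commute.all _ _)
    simpa using this
  have hl : IsLocalRing B := IsLocalRing.of_isUnit_or_isUnit_one_sub_self fun b => by
    by_cases hb : ε b = 0
    · right; apply hu; simp [hb]
    · left; exact hu b hb
  refine ⟨hl, fun b => ?_⟩
  rw [IsLocalRing.mem_maximalIdeal, mem_nonunits_iff]
  constructor
  · intro h; by_contra h'; exact h (hu b h')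
  · intro h h'
    have := h'.map ε
    rw [h] at this
    exact not_isUnit_zero this

theorem aux_proj [IsScalarTower K B K] [Module.Finite K X] [Module.Finite K Y]
    (ε : B →ₐ[K] K) (hε : ∀ b, ε b = 0 → IsNilpotent b) (hsm : ∀ (b : B) (x : K), b • x = ε b * x)
    (f : X →ₗ[B] Y) (g : Y →ₗ[B] Z) [Module.Flat B Y]
    (hfg : Function.Exact f g) (hg : Function.Surjective g) 
    (h : Module.finrank K (Y →ₗ[B] K) = 
      Module.finrank K (X →ₗ[B] K) + Module.finrank K (Z →ₗ[B] K)) :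
    Module.Projective B Z := by
  obtain ⟨hl, hm⟩ := aux_local ε hε
  have hX : Module.Finite B X := Module.Finite.of_restrictScalars_finite K B X
  have hY : Module.Finite B Y := Module.Finite.of_restrictScalars_finite K B Y
  have : Module.Free B Y := Module.free_of_flat_of_isLocalRing
  have : Module.Free B Z := by
    apply Module.free_of_lTensor_residueField_injective f g hg hfg
    have key : ∀ x, f x ∈ (IsLocalRing.maximalIdeal B • ⊤ : Submodule B Y) →
        x ∈ (IsLocalRing.maximalIdeal B • ⊤ : Submodule B X) := by
      intro x hx
      by_contra hx'
      let P : Submodule B X := IsLocalRing.maximalIdeal B • ⊤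
      have h0 : P.mkQ x ≠ 0 := by simpa [P] using hx'
      obtain ⟨φ, hφ⟩ : ∃ φ : Module.Dual K (X ⧸ P), φ (P.mkQ x) ≠ 0 := by
        have h2 := mt (Module.forall_dual_apply_eq_zero_iff K (P.mkQ x)).1 h0
        push Not at h2
        exact h2
      let φ' : X →ₗ[B] K :=
        { toFun := fun x => φ (P.mkQ x)
          map_add' := by simp
          map_smul' := by
            intro b x
            have e : b • P.mkQ x = ε b • P.mkQ x := by
              rw [← sub_eq_zero, ← algebraMap_smul B (ε b), ← sub_smul, ← map_smul]
              rw [Submodule.mkQ_apply, Submodule.Quotient.mk_eq_zero]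
              exact Submodule.smul_mem_smul ((hm _).2 (by simp)) trivial
            rw [map_smul, e, map_smul]
            simp [hsm] }
      obtain ⟨ψ, hψ⟩ := aux_ext f g hfg hg h φ'
      apply hφ
      have h3 : φ (P.mkQ x) = ψ (f x) := (hψ x).symm
      rw [h3]
      have : (IsLocalRing.maximalIdeal B • ⊤ : Submodule B Y) ≤ LinearMap.ker ψ := by
        rw [Submodule.smul_le]
        intro r hr n _
        simp [hsm, (hm r).1 hr]
      exact this hx
    rw [injective_iff_map_eq_zero]
    intro a ha
    obtain ⟨x, rfl⟩ := TensorProduct.mk_surjective B X (IsLocalRing.ResidueField B)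
      Ideal.Quotient.mk_surjective a
    have hz : ∀ (W : Type) [AddCommGroup W] [Module B W] (w : W),
        (1 : IsLocalRing.ResidueField B) ⊗ₜ[B] w = 0 ↔
          w ∈ (IsLocalRing.maximalIdeal B • ⊤ : Submodule B W) := by
      intro W _ _ w
      have e := TensorProduct.quotTensorEquivQuotSMul_mk_tmul (M := W) (IsLocalRing.maximalIdeal B) 1 w
      rw [one_smul] at e
      rw [← Submodule.Quotient.mk_eq_zero, ← e]
      exact (LinearEquiv.map_eq_zero_iff _).symm
    have h1 : (1 : IsLocalRing.ResidueField B) ⊗ₜ[B] f x = 0 := by simpa using ha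
    exact (hz X x).2 (key x ((hz Y _).1 h1))
  infer_instance

end Abstract

section Concrete

set_option linter.style.haveILetI false

variable (k K G : Type) [Field k] [Field K] [Algebra k K] [Group G]

theorem resB_nil (p : ℕ) (hp : p ≠ 0) (b : Bp K p) (hb : resB K p hp b = 0) : IsNilpotent b := by
  obtain ⟨q, rfl⟩ := AdjoinRoot.mk_surjective b
  have h : q.eval 0 = 0 := by
    simpa [resB, AdjoinRoot.liftAlgHom_mk, Polynomial.eval₂_eq_eval_map, Algebra.ofId] using hb
  rw [← Polynomial.IsRoot.def, ← Polynomial.dvd_iff_isRoot] at h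
  simp only [map_zero, sub_zero] at h
  refine ⟨p, ?_⟩
  rw [← map_pow, AdjoinRoot.mk_eq_zero]
  exact pow_dvd_pow_of_dvd h p

variable {X Y : Type} [AddCommGroup X] [AddCommGroup Y] [Module (MonoidAlgebra k G) X]
  [Module (MonoidAlgebra k G) Y]

/-- restriction of scalars of a map -/
noncomputable def resMap (f : X →ₗ[MonoidAlgebra k G] Y) :
    RestrictScalars k (MonoidAlgebra k G) X →ₗ[k] RestrictScalars k (MonoidAlgebra k G) Y where
  toFun x := f x
  map_add' := f.map_add
  map_smul' c x := f.map_smul (algebraMap k (MonoidAlgebra k G) c) x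

/-- pure tensors -/
noncomputable def tm (a : K) (x : X) : MK k K G X :=
  (rhoK k K G X).asModuleEquiv.symm
    (a ⊗ₜ[k] (RestrictScalars.addEquiv k (MonoidAlgebra k G) X).symm x)

variable {k K G} in
theorem MK_ind {P : MK k K G X → Prop} (h0 : P 0) (ht : ∀ a x, P (tm k K G a x))
    (ha : ∀ x y, P x → P y → P (x + y)) (x : MK k K G X) : P x := by
  have : ∀ y, P ((rhoK k K G X).asModuleEquiv.symm y) := by
    intro y
    induction y using TensorProduct.induction_on with
    | zero => rw [map_zero]; exact h0
    | add a b h1 h2 => rw [map_add]; exact ha _ _ h1 h2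
    | tmul a x => exact ht a x
  exact this ((rhoK k K G X).asModuleEquiv x)

theorem single_smul_tm (g : G) (c a : K) (x : X) :
    MonoidAlgebra.single g c • tm k K G a x =
      tm k K G (c * a) (MonoidAlgebra.single g (1 : k) • x) := by
  rw [Representation.single_smul]
  rfl

theorem smul_tm (c a : K) (x : X) : c • tm k K G a x = tm k K G (c * a) x := rfl

/-- base change of a map, `K`-linear -/
noncomputable def mkMapK (f : X →ₗ[MonoidAlgebra k G] Y) : MK k K G X →ₗ[K] MK k K G Y :=
  (rhoK k K G Y).asModuleEquiv.symm.toLinearMap ∘ₗ (resMap k G f).baseChange K ∘ₗ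
    (rhoK k K G X).asModuleEquiv.toLinearMap

theorem mkMapK_tm (f : X →ₗ[MonoidAlgebra k G] Y) (a : K) (x : X) :
    mkMapK k K G f (tm k K G a x) = tm k K G a (f x) := rfl

/-- base change of a map -/
noncomputable def mkMap (f : X →ₗ[MonoidAlgebra k G] Y) :
    MK k K G X →ₗ[MonoidAlgebra K G] MK k K G Y where
  toFun := mkMapK k K G f
  map_add' := map_add _
  map_smul' c x := by
    rw [RingHom.id_apply]
    induction c using MonoidAlgebra.induction_linear with
    | zero => rw [zero_smul, zero_smul, map_zero]
    | add a b ha hb => rw [add_smul, add_smul, map_add, ← ha, ← hb]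
    | single g c =>
      induction x using MK_ind with
      | h0 => rw [smul_zero, map_zero, smul_zero]
      | ha a b ha hb => rw [smul_add, map_add, map_add, smul_add, ha, hb]
      | ht a x => rw [single_smul_tm, mkMapK_tm, mkMapK_tm, single_smul_tm, map_smul]

theorem mkMap_tm (f : X →ₗ[MonoidAlgebra k G] Y) (a : K) (x : X) :
    mkMap k K G f (tm k K G a x) = tm k K G a (f x) := rfl

theorem mkMap_surj (f : X →ₗ[MonoidAlgebra k G] Y) (hf : Function.Surjective f) :
    Function.Surjective (mkMap k K G f) :=
  LinearMap.lTensor_surjective K (g := resMap k G f) hf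

theorem mkMap_inj (f : X →ₗ[MonoidAlgebra k G] Y) (hf : Function.Injective f) :
    Function.Injective (mkMap k K G f) :=
  Module.Flat.lTensor_preserves_injective_linearMap (M := K) (resMap k G f) hf

theorem mkMap_exact {Z : Type} [AddCommGroup Z] [Module (MonoidAlgebra k G) Z]
    (f : X →ₗ[MonoidAlgebra k G] Y) (g : Y →ₗ[MonoidAlgebra k G] Z)
    (hfg : Function.Exact f g) (hg : Function.Surjective g) :
    Function.Exact (mkMap k K G f) (mkMap k K G g) :=
  @lTensor_exact k (RestrictScalars k (MonoidAlgebra k G) X)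
    (RestrictScalars k (MonoidAlgebra k G) Y) (RestrictScalars k (MonoidAlgebra k G) Z) _
    (instAddCommGroupRestrictScalars _ _ _) (instAddCommGroupRestrictScalars _ _ _)
    (instAddCommGroupRestrictScalars _ _ _)
    (RestrictScalars.module k (MonoidAlgebra k G) X)
    (RestrictScalars.module k (MonoidAlgebra k G) Y)
    (RestrictScalars.module k (MonoidAlgebra k G) Z)
    (resMap k G f) (resMap k G g) K _ _ hfg hg

theorem res_finite [Finite G] (h : Module.Finite (MonoidAlgebra k G) X) :
    Module.Finite k (RestrictScalars k (MonoidAlgebra k G) X) := by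
  letI := RestrictScalars.moduleOrig k (MonoidAlgebra k G) X
  have : Module.Finite (MonoidAlgebra k G) (RestrictScalars k (MonoidAlgebra k G) X) := h
  exact Module.Finite.trans (MonoidAlgebra k G) _

theorem mk_finite [Finite G] (h : Module.Finite (MonoidAlgebra k G) X) :
    Module.Finite K (MK k K G X) := by
  have := res_finite k G h
  infer_instance

/-- The comparison map for free modules. -/
noncomputable def frMap (n : ℕ) :
    (Fin n → MonoidAlgebra K G) →ₗ[MonoidAlgebra K G] MK k K G (Fin n → MonoidAlgebra k G) where
  toFun v := ∑ i, v i • tm k K G 1 (Pi.single i 1)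
  map_add' v w := by simp [add_smul, Finset.sum_add_distrib]
  map_smul' c v := by simp [Finset.smul_sum, mul_smul]

theorem tm_add (a : K) (x y : X) : tm k K G a (x + y) = tm k K G a x + tm k K G a y :=
  TensorProduct.tmul_add (R := k) (N := RestrictScalars k (MonoidAlgebra k G) X) a x y

theorem tm_zero (a : K) : tm k K G a (0 : X) = 0 :=
  TensorProduct.tmul_zero (R := k) _ a

theorem tm_sum {ι : Type} (s : Finset ι) (a : K) (x : ι → X) :
    tm k K G a (∑ i ∈ s, x i) = ∑ i ∈ s, tm k K G a (x i) :=
  TensorProduct.tmul_sum (R := k) (N := RestrictScalars k (MonoidAlgebra k G) X) a s x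

theorem frMap_surj (n : ℕ) : Function.Surjective (frMap k K G n) := by
  rw [← LinearMap.range_eq_top, eq_top_iff]
  rintro x -
  induction x using MK_ind with
  | h0 => exact zero_mem _
  | ha a b ha hb => exact add_mem ha hb
  | ht a x =>
    have hx : x = ∑ i, x i • Pi.single i (1 : MonoidAlgebra k G) := by
      rw [← pi_eq_sum_univ' x]
    have : x = ∑ i, Pi.single i (x i) := (Finset.univ_sum_single x).symm
    rw [this, tm_sum]
    refine sum_mem fun i _ => ?_
    generalize x i = y
    induction y using MonoidAlgebra.induction_linear with
    | zero => rw [Pi.single_zero, tm_zero]; exact zero_mem _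
    | add u v hu hv => rw [Pi.single_add, tm_add]; exact add_mem hu hv
    | single g c =>
      refine ⟨Pi.single i (MonoidAlgebra.single g (algebraMap k K c * a)), ?_⟩
      simp only [frMap, LinearMap.coe_mk, AddHom.coe_mk]
      rw [Finset.sum_eq_single i (by intro j _ hj; rw [Pi.single_eq_of_ne hj, zero_smul]) (by simp)]
      rw [Pi.single_eq_same, single_smul_tm, mul_one]
      have e : (Pi.single i (MonoidAlgebra.single g c) : Fin n → MonoidAlgebra k G) =
          algebraMap k (MonoidAlgebra k G) c •
            (MonoidAlgebra.single g (1 : k) • Pi.single i 1) := by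
        rw [← Pi.single_smul, ← Pi.single_smul]
        simp
      rw [e, ← Algebra.smul_def]
      exact TensorProduct.smul_tmul (R := k) c a _

theorem finrank_MA [Fintype G] : Module.finrank K (MonoidAlgebra K G) = Fintype.card G := by
  rw [(MonoidAlgebra.coeffLinearEquiv K).finrank_eq, Module.finrank_finsupp_self]

theorem frMap_bij [Finite G] (n : ℕ) : Function.Bijective (frMap k K G n) := by
  refine ⟨?_, frMap_surj k K G n⟩
  have := Fintype.ofFinite G
  have hfin : Module.Finite K (MK k K G (Fin n → MonoidAlgebra k G)) :=
    mk_finite k K G inferInstance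
  have h1 : Module.finrank K (Fin n → MonoidAlgebra K G) = n * Fintype.card G := by
    rw [Module.finrank_pi_fintype]; simp [finrank_MA]
  have h2 : Module.finrank K (MK k K G (Fin n → MonoidAlgebra k G)) = n * Fintype.card G := by
    let e : RestrictScalars k (MonoidAlgebra k G) (Fin n → MonoidAlgebra k G) ≃ₗ[k]
       (Fin n → MonoidAlgebra k G) :=
      { RestrictScalars.addEquiv k (MonoidAlgebra k G) (Fin n → MonoidAlgebra k G) with
        map_smul' := fun c x => algebraMap_smul (MonoidAlgebra k G) c (M := Fin n → MonoidAlgebra k G) x }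
    have : Module.Free k (RestrictScalars k (MonoidAlgebra k G) (Fin n → MonoidAlgebra k G)) :=
      Module.Free.of_equiv e.symm
    have : Module.finrank K (MK k K G (Fin n → MonoidAlgebra k G)) =
      Module.finrank k (RestrictScalars k (MonoidAlgebra k G) (Fin n → MonoidAlgebra k G)) :=
      Module.finrank_baseChange
    rw [this]
    rw [e.finrank_eq]
    rw [Module.finrank_pi_fintype]; simp [finrank_MA]
  letI : @Module K (MK k K G (Fin n → MonoidAlgebra k G)) _
    (@AddCommGroup.toAddCommMonoid _ (Representation.instAddCommGroupAsModule _)) :=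
      Representation.instModuleAsModule _
  have h3 := LinearMap.injective_iff_surjective_of_finrank_eq_finrank (h1.trans h2.symm)
    (f := (frMap k K G n).restrictScalars K)
  exact h3.2 (frMap_surj k K G n)

variable (p : ℕ) (hp : p ≠ 0) (α : Bp K p →ₐ[K] MonoidAlgebra K G)

/-- the `B`-module structure by restriction -/
noncomputable abbrev modB (V : Type) [AddCommMonoid V] [Module (MonoidAlgebra K G) V] :
    Module (Bp K p) V := Module.compHom V α.toRingHom

theorem towB (V : Type) [AddCommMonoid V] [Module (MonoidAlgebra K G) V] [Module K V]
    [IsScalarTower K (MonoidAlgebra K G) V] : 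
    letI := modB K G p α V
    IsScalarTower K (Bp K p) V := by
  letI := modB K G p α V
  refine ⟨fun c b x => ?_⟩
  change α (c • b) • x = c • (α b • x)
  rw [map_smul, smul_assoc]

/-- `K` as a `B`-module. -/
noncomputable abbrev modK : Module (Bp K p) K := Module.compHom K (resB K p hp).toRingHom

theorem commK : letI := modK K p hp; SMulCommClass (Bp K p) K K :=
  letI := modK K p hp
  ⟨fun b c x => by
      show resB K p hp b * (c * x) = c * (resB K p hp b * x); ring⟩

theorem towK : letI := modK K p hp; IsScalarTower K (Bp K p) K :=
  letI := modK K p hp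
  ⟨fun c b x => by
      show resB K p hp (c • b) * x = c * (resB K p hp b * x)
      rw [map_smul, smul_eq_mul, mul_assoc]⟩

theorem fr_flat [Finite G] (n : ℕ)
    (hflat : letI := modB K G p α (MonoidAlgebra K G); Module.Flat (Bp K p) (MonoidAlgebra K G)) :
    letI := modB K G p α (MK k K G (Fin n → MonoidAlgebra k G))
    Module.Flat (Bp K p) (MK k K G (Fin n → MonoidAlgebra k G)) := by
  letI := modB K G p α (MK k K G (Fin n → MonoidAlgebra k G))
  letI := modB K G p α (MonoidAlgebra K G)
  haveI := hflat
  let F : (Fin n → MonoidAlgebra K G) →ₗ[Bp K p] MK k K G (Fin n → MonoidAlgebra k G) :=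
    { toFun := frMap k K G n
      map_add' := map_add _
      map_smul' := fun b x => map_smul (frMap k K G n) (α b) x }
  have h1 : Module.Flat (Bp K p) (Fin n → MonoidAlgebra K G) :=
    Module.Flat.of_linearEquiv (DFinsupp.linearEquivFunOnFintype (R := Bp K p)
      (M := fun _ : Fin n => MonoidAlgebra K G)).symm
  exact Module.Flat.of_linearEquiv (LinearEquiv.ofBijective F (frMap_bij k K G n)).symm

/-- Synonym for the restricted module. -/
def MB (_ : Bp K p →ₐ[K] MonoidAlgebra K G) (M : Type) [AddCommGroup M]
    [Module (MonoidAlgebra k G) M] : Type := MK k K G M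

noncomputable instance instMBgrp : AddCommGroup (MB k K G p α X) :=
  inferInstanceAs (AddCommGroup (MK k K G X))

noncomputable instance instMBK : Module K (MB k K G p α X) :=
  inferInstanceAs (Module K (MK k K G X))

noncomputable instance instMBB : Module (Bp K p) (MB k K G p α X) :=
  modB K G p α (MK k K G X)

instance instMBtow : IsScalarTower K (Bp K p) (MB k K G p α X) :=
  towB K G p α (MK k K G X)

/-- Base change of a linear map, restricted to `B`. -/
noncomputable def mB (f : X →ₗ[MonoidAlgebra k G] Y) : MB k K G p α X →ₗ[Bp K p] MB k K G p α Y where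
  toFun := mkMap k K G f
  map_add' := map_add (mkMap k K G f)
  map_smul' := fun b x => (mkMap k K G f).map_smul (α b) x

theorem mB_surj (f : X →ₗ[MonoidAlgebra k G] Y) (hf : Function.Surjective f) :
    Function.Surjective (mB k K G p α f) := mkMap_surj k K G f hf

theorem mB_inj (f : X →ₗ[MonoidAlgebra k G] Y) (hf : Function.Injective f) :
    Function.Injective (mB k K G p α f) := mkMap_inj k K G f hf

theorem mB_exact {Z : Type} [AddCommGroup Z] [Module (MonoidAlgebra k G) Z]
    (f : X →ₗ[MonoidAlgebra k G] Y) (g : Y →ₗ[MonoidAlgebra k G] Z)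
    (hfg : Function.Exact f g) (hg : Function.Surjective g) :
    Function.Exact (mB k K G p α f) (mB k K G p α g) := mkMap_exact k K G f g hfg hg

theorem mB_finite [Finite G] (h : Module.Finite (MonoidAlgebra k G) X) :
    Module.Finite K (MB k K G p α X) := mk_finite k K G h

theorem mB_flat [Finite G] (n : ℕ)
    (hflat : letI := modB K G p α (MonoidAlgebra K G); Module.Flat (Bp K p) (MonoidAlgebra K G)) :
    Module.Flat (Bp K p) (MB k K G p α (Fin n → MonoidAlgebra k G)) :=
  fr_flat k K G p α n hflat

theorem chi_eq (M : Type) [AddCommGroup M] [Module (MonoidAlgebra k G) M] :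
    letI := modK K p hp
    haveI := commK K p hp
    chiAlpha k K G p hp α M = Module.finrank K (MB k K G p α M →ₗ[Bp K p] K) := rfl

theorem thick_iff (M : Type) [AddCommGroup M] [Module (MonoidAlgebra k G) M] :
    MemThick k K G p α M ↔ Module.Finite (MonoidAlgebra k G) M ∧
      Module.Projective (Bp K p) (MB k K G p α M) := Iff.rfl

end Concrete
/-- For a π-point `α : K[t]/(t^p) → KG` (a flat `K`-algebra map), the
function `χ_α` is subadditive on finite dimensional `kG`-modules and its additive locus
is `Thick(α) = { M : α^*(M ⊗_k K) is projective }`. -/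
theorem statement10 (k K G : Type) [Field k] [Field K] [Algebra k K] [Group G] [Finite G]
    (p : ℕ) [CharP k p] (hp : 0 < p)
    (α : Bp K p →ₐ[K] MonoidAlgebra K G)
    (hflat : letI : Module (Bp K p) (MonoidAlgebra K G) := Module.compHom _ α.toRingHom
      Module.Flat (Bp K p) (MonoidAlgebra K G)) :
    IsSubadditive (MonoidAlgebra k G) (chiAlpha k K G p hp.ne' α) ∧
    ∀ (M : Type) [AddCommGroup M] [Module (MonoidAlgebra k G) M],
      MemAdloc (MonoidAlgebra k G) (chiAlpha k K G p hp.ne' α) M ↔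
        MemThick k K G p α M := by
  let := modK K p hp.ne'
  have := commK K p hp.ne'
  have := towK K p hp.ne'
  refine ⟨⟨?_, ?_, ?_⟩, ?_⟩
  · intro X Y _ _ _ _ hX hY e
    have := mB_finite k K G p α hX
    have := mB_finite k K G p α hY
    rw [chi_eq, chi_eq]
    apply le_antisymm
    · exact aux_surj (mB k K G p α e.symm.toLinearMap) (mB_surj k K G p α _ e.symm.surjective)
    · exact aux_surj (mB k K G p α e.toLinearMap) (mB_surj k K G p α _ e.surjective)
  · intro X Y _ _ _ _ hX hY
    have := mB_finite k K G p α (X := X × Y) inferInstance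
    rw [chi_eq, chi_eq, chi_eq]
    refine aux_eq (mB k K G p α (LinearMap.inl (MonoidAlgebra k G) X Y))
      (mB k K G p α (LinearMap.snd (MonoidAlgebra k G) X Y))
      (mB_exact k K G p α _ _ Function.Exact.inl_snd LinearMap.snd_surjective)
      (mB_surj k K G p α _ LinearMap.snd_surjective)
      (mB k K G p α (LinearMap.fst (MonoidAlgebra k G) X Y)) ?_
    ext x
    change mkMap k K G _ (mkMap k K G _ x) = x
    induction x using MK_ind with
    | h0 => simp
    | ha a b ha hb => rw [map_add, map_add, ha, hb]
    | ht a x => rfl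
  · intro X Y Z _ _ _ _ _ _ hX hY hZ f g hfg hg
    have := mB_finite k K G p α hX
    have := mB_finite k K G p α hY
    rw [chi_eq, chi_eq, chi_eq]
    exact aux_le (mB k K G p α f) (mB k K G p α g) (mB_exact k K G p α f g hfg hg) (mB_surj k K G p α g hg)
  · intro M _ _
    rw [thick_iff]
    constructor
    · rintro ⟨hM, h⟩
      refine ⟨hM, ?_⟩
      obtain ⟨n, g, hg⟩ := Module.Finite.exists_fin' (MonoidAlgebra k G) M
      have : Module.Finite k (MonoidAlgebra k G) := inferInstance
      have : IsNoetherianRing (MonoidAlgebra k G) := IsNoetherianRing.of_finite k _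
      have hX : Module.Finite (MonoidAlgebra k G) (LinearMap.ker g) := inferInstance
      have hY : Module.Finite (MonoidAlgebra k G) (Fin n → MonoidAlgebra k G) := inferInstance
      have hex : Function.Exact (LinearMap.ker g).subtype g := LinearMap.exact_subtype_ker_map g
      have h1 := h (LinearMap.ker g) (Fin n → MonoidAlgebra k G) hX hY
        (LinearMap.ker g).subtype g (Submodule.injective_subtype _) hex hg
      rw [chi_eq, chi_eq, chi_eq] at h1
      have := mB_finite k K G p α hX
      have := mB_finite k K G p α hY
      have := mB_flat k K G p α n hflat
      exact aux_proj (resB K p hp.ne') (resB_nil K p hp.ne') (fun _ _ => rfl)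
        (mB k K G p α (LinearMap.ker g).subtype) (mB k K G p α g) (mB_exact k K G p α _ g hex hg)
        (mB_surj k K G p α g hg) h1.symm
    · rintro ⟨hM, hP⟩
      refine ⟨hM, ?_⟩
      intro X Y _ _ _ _ hX hY f g hf hfg hg
      rw [chi_eq, chi_eq, chi_eq]
      have := mB_finite k K G p α hX
      have := mB_finite k K G p α hY
      have hg' : Function.Surjective (mB k K G p α g) := mB_surj k K G p α g hg
      have hex : Function.Exact (mB k K G p α f) (mB k K G p α g) := mB_exact k K G p α f g hfg hg
      have hs := Module.projective_lifting_property (mB k K G p α g) LinearMap.id hg'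
      obtain ⟨r, hr⟩ := ((Function.Exact.split_tfae hex (mB_inj k K G p α f hf) hg').out 0 1).1 hs
      exact (aux_eq (mB k K G p α f) (mB k K G p α g) hex hg' r hr).symm
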